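/- arXiv:1408.0412 — 4 statements merged into one kernel-verified Lean document; each statement's English description precedes it below -/
import Mathlib

section
/- Let δ > 0, c_A > 0, c_B > 0, let Φ be the standard normal cumulative distribution function, Φ̄ = 1 − Φ, and let F be the Hüsler–Reiss bivariate distribution function with parameter δ. If (a_m)_{m} is a sequence of positive reals with m/a_m → 1 as m → ∞, then m · [ 1 − e^{−1/(c_A a_m)} − e^{−1/(c_B a_m)} + F(a_m c_A, a_m c_B) ] converges, as m → ∞, to (1/c_A) Φ̄( log(c_B/c_A)/(2√δ) + √δ ) + (1/c_B) Φ̄( log(c_A/c_B)/(2√δ) + √δ ). In particular, m(1 − e^{−1/(c_A a_m)}) → 1/c_A. -/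
open MeasureTheory Filter Real

/-- The standard normal cumulative distribution function. -/
noncomputable def stdNormalCDF (x : ℝ) : ℝ :=
  (Real.sqrt (2 * Real.pi))⁻¹ * ∫ t in Set.Iic x, Real.exp (-t ^ 2 / 2)

/-- `Φ̄ = 1 - Φ`. -/
noncomputable def stdNormalTail (x : ℝ) : ℝ := 1 - stdNormalCDF x

/-- The Hüsler–Reiss bivariate distribution function with parameter `δ`. -/
noncomputable def huslerReiss (δ y₁ y₂ : ℝ) : ℝ :=
  Real.exp
    (-(1 / y₁) * stdNormalCDF (Real.log (y₂ / y₁) / (2 * Real.sqrt δ) + Real.sqrt δ)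
      - (1 / y₂) * stdNormalCDF (Real.log (y₁ / y₂) / (2 * Real.sqrt δ) + Real.sqrt δ))

theorem aux_lim (a : ℕ → ℝ)
    (ha : Tendsto (fun m : ℕ => (m : ℝ) / a m) atTop (nhds 1)) (k : ℝ) :
    Tendsto (fun m : ℕ => (m : ℝ) * (1 - Real.exp (-k * (a m)⁻¹))) atTop (nhds k) := by
  have h0 : Tendsto (fun m : ℕ => (a m)⁻¹) atTop (nhds 0) := by
    have h1 := ha.mul (tendsto_inv_atTop_nhds_zero_nat (𝕜 := ℝ))
    rw [mul_zero] at h1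
    refine h1.congr' ?_
    filter_upwards [eventually_ne_atTop 0] with m hm
    have : (m : ℝ) ≠ 0 := by exact_mod_cast hm
    field_simp
  have hd : HasDerivAt (fun x : ℝ => 1 - Real.exp (-k * x)) k 0 := by
    have := (((hasDerivAt_id (0 : ℝ)).const_mul (-k)).exp).const_sub 1
    simpa using this
  have hc : ContinuousAt (dslope (fun x : ℝ => 1 - Real.exp (-k * x)) 0) 0 :=
    continuousAt_dslope_same.2 hd.differentiableAt
  have h2 := ha.mul (hc.tendsto.comp h0)
  rw [dslope_same, hd.deriv, one_mul] at h2
  refine h2.congr fun m => ?_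
  have := sub_smul_dslope (fun x : ℝ => 1 - Real.exp (-k * x)) 0 (a m)⁻¹
  simp only [sub_zero, smul_eq_mul, mul_zero, Real.exp_zero, sub_self] at this
  rw [← this, Function.comp, div_eq_mul_inv, mul_assoc]

/-- For `δ, c_A, c_B > 0` and positive reals `a_m` with `m / a_m → 1`,
`m · [1 − e^{−1/(c_A a_m)} − e^{−1/(c_B a_m)} + F(a_m c_A, a_m c_B)]` converges to
`(1/c_A) Φ̄(log(c_B/c_A)/(2√δ) + √δ) + (1/c_B) Φ̄(log(c_A/c_B)/(2√δ) + √δ)`; in particular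
`m (1 − e^{−1/(c_A a_m)}) → 1/c_A`. -/
theorem statement_12
    (δ cA cB : ℝ) (hδ : 0 < δ) (hcA : 0 < cA) (hcB : 0 < cB)
    (a : ℕ → ℝ) (ha_pos : ∀ m, 0 < a m)
    (ha : Tendsto (fun m : ℕ => (m : ℝ) / a m) atTop (nhds 1)) :
    Tendsto
      (fun m : ℕ => (m : ℝ) *
        (1 - Real.exp (-1 / (cA * a m)) - Real.exp (-1 / (cB * a m))
          + huslerReiss δ (a m * cA) (a m * cB)))
      atTop
      (nhds
        ((1 / cA) * stdNormalTail (Real.log (cB / cA) / (2 * Real.sqrt δ) + Real.sqrt δ)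
          + (1 / cB) * stdNormalTail (Real.log (cA / cB) / (2 * Real.sqrt δ) + Real.sqrt δ)))
    ∧ Tendsto (fun m : ℕ => (m : ℝ) * (1 - Real.exp (-1 / (cA * a m))))
        atTop (nhds (1 / cA)) := by
  have hA : Tendsto (fun m : ℕ => (m : ℝ) * (1 - Real.exp (-1 / (cA * a m))))
        atTop (nhds (1 / cA)) := by
    refine (aux_lim a ha (1 / cA)).congr fun m => ?_
    have := (ha_pos m).ne'
    congr 3
    field_simp
  have hB : Tendsto (fun m : ℕ => (m : ℝ) * (1 - Real.exp (-1 / (cB * a m))))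
        atTop (nhds (1 / cB)) := by
    refine (aux_lim a ha (1 / cB)).congr fun m => ?_
    have := (ha_pos m).ne'
    congr 3
    field_simp
  refine ⟨?_, hA⟩
  set p := stdNormalCDF (Real.log (cB / cA) / (2 * Real.sqrt δ) + Real.sqrt δ) with hp
  set q := stdNormalCDF (Real.log (cA / cB) / (2 * Real.sqrt δ) + Real.sqrt δ) with hq
  have hF : ∀ m, huslerReiss δ (a m * cA) (a m * cB)
      = Real.exp (-(p / cA + q / cB) * (a m)⁻¹) := by
    intro m
    have := (ha_pos m).ne'
    unfold huslerReiss
    rw [mul_div_mul_left _ _ this, mul_div_mul_left _ _ this, ← hp, ← hq]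
    congr 1
    field_simp
    ring
  have h := (hA.add hB).sub (aux_lim a ha (p / cA + q / cB))
  have e : 1 / cA + 1 / cB - (p / cA + q / cB)
      = (1 / cA) * (1 - p) + (1 / cB) * (1 - q) := by ring
  rw [e] at h
  unfold stdNormalTail
  refine h.congr fun m => ?_
  rw [hF]
  ring
end

section
/- Let δ > 0, c_A > 0, c_B > 0, and let (V, W) be a pair of real random variables with P(V > 0) = P(W > 0) = 1 and with joint distribution function P(V ≤ y₁, W ≤ y₂) = F(y₁, y₂) for all y₁, y₂ > 0, where F is the Hüsler–Reiss bivariate distribution function with parameter δ. Then lim_{x→∞} P(W > c_B x | V > c_A x) = Φ̄( log(c_B/c_A)/(2√δ) + √δ ) + (c_A/c_B) Φ̄( log(c_A/c_B)/(2√δ) + √δ ), where Φ̄ = 1 − Φ and Φ is the standard normal cumulative distribution function. -/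
open MeasureTheory Filter Real

lemma gauss_integrable : Integrable (fun t : ℝ => Real.exp (-t ^ 2 / 2)) := by
  have h := integrable_exp_neg_mul_sq (b := 1/2) (by norm_num)
  refine h.congr (Eventually.of_forall fun t => ?_)
  simp only; congr 1; ring

lemma gauss_integral : ∫ t : ℝ, Real.exp (-t ^ 2 / 2) = Real.sqrt (2 * Real.pi) := by
  have h := integral_gaussian (1/2)
  rw [show 2 * Real.pi = Real.pi / (1/2) by ring, ← h]
  congr 1; ext t; congr 1; ring

lemma sqrt_two_pi_pos : 0 < Real.sqrt (2 * Real.pi) := by positivity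

lemma cdf_nonneg (x : ℝ) : 0 ≤ stdNormalCDF x := by
  unfold stdNormalCDF
  have : 0 ≤ ∫ t in Set.Iic x, Real.exp (-t ^ 2 / 2) :=
    integral_nonneg fun t => (Real.exp_pos _).le
  positivity

lemma cdf_le_one (x : ℝ) : stdNormalCDF x ≤ 1 := by
  unfold stdNormalCDF
  rw [inv_mul_le_iff₀ sqrt_two_pi_pos, mul_one, ← gauss_integral]
  exact setIntegral_le_integral gauss_integrable
    (Eventually.of_forall fun t => (Real.exp_pos _).le)

lemma cdf_tendsto : Tendsto stdNormalCDF atTop (nhds 1) := by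
  have h := (aecover_Iic (μ := (volume : Measure ℝ)) (tendsto_id (α := ℝ) (x := atTop))).integral_tendsto_of_countably_generated
    gauss_integrable
  rw [gauss_integral] at h
  have h2 := h.const_mul (Real.sqrt (2 * Real.pi))⁻¹
  rw [inv_mul_cancel₀ sqrt_two_pi_pos.ne'] at h2
  exact h2

lemma hr_symm (δ a b : ℝ) : huslerReiss δ a b = huslerReiss δ b a := by
  unfold huslerReiss; congr 1; ring

lemma hr_tendsto (δ y : ℝ) (hδ : 0 < δ) (hy : 0 < y) :
    Tendsto (fun z => huslerReiss δ y z) atTop (nhds (Real.exp (-(1 / y)))) := by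
  unfold huslerReiss
  refine (Real.continuous_exp.tendsto _).comp ?_
  have h1 : Tendsto (fun z : ℝ => Real.log (z / y) / (2 * Real.sqrt δ) + Real.sqrt δ) atTop atTop := by
    apply tendsto_atTop_add_const_right
    exact (Real.tendsto_log_atTop.comp (tendsto_id.atTop_div_const hy)).atTop_div_const (by positivity)
  have h2 := (cdf_tendsto.comp h1).const_mul (-(1 / y))
  have h3 : Tendsto (fun z : ℝ => (1 / z) * stdNormalCDF (Real.log (y / z) / (2 * Real.sqrt δ) + Real.sqrt δ))
      atTop (nhds 0) := by
    have h0 : Tendsto (fun z : ℝ => 1 / z) atTop (nhds 0) := by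
      simpa using tendsto_inv_atTop_zero (𝕜 := ℝ)
    refine squeeze_zero' ?_ ?_ h0
    · filter_upwards [eventually_gt_atTop 0] with z hz
      exact mul_nonneg (by positivity) (cdf_nonneg _)
    · filter_upwards [eventually_gt_atTop 0] with z hz
      exact mul_le_of_le_one_right (by positivity) (cdf_le_one _)
  simpa using h2.sub h3

lemma marginal {Ω : Type*} [MeasurableSpace Ω] (P : Measure Ω) [IsProbabilityMeasure P]
    (V W : Ω → ℝ) (δ y : ℝ) (hδ : 0 < δ) (hy : 0 < y)
    (hjoint : ∀ z : ℝ, 0 < z →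
      (P {ω | V ω ≤ y ∧ W ω ≤ z}).toReal = huslerReiss δ y z) :
    (P {ω | V ω ≤ y}).toReal = Real.exp (-(1 / y)) := by
  have hmono : Monotone (fun z : ℝ => {ω | V ω ≤ y ∧ W ω ≤ z}) :=
    fun a b hab ω h => ⟨h.1, h.2.trans hab⟩
  have h := tendsto_measure_iUnion_atTop (μ := P) hmono
  have hU : (⋃ z : ℝ, {ω | V ω ≤ y ∧ W ω ≤ z}) = {ω | V ω ≤ y} := by
    ext ω
    simp only [Set.mem_iUnion, Set.mem_ofPred_eq]
    exact ⟨fun ⟨_, h⟩ => h.1, fun h => ⟨W ω, h, le_rfl⟩⟩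
  rw [hU] at h
  have h' := (ENNReal.tendsto_toReal (measure_ne_top P _)).comp h
  refine tendsto_nhds_unique h' ((hr_tendsto δ y hδ hy).congr' ?_)
  filter_upwards [eventually_gt_atTop 0] with z hz
  exact (hjoint z hz).symm

lemma exp_lim (k : ℝ) : Tendsto (fun x : ℝ => x * (1 - Real.exp (-(k / x)))) atTop (nhds k) := by
  have hd : HasDerivAt (fun t : ℝ => 1 - Real.exp (-(k * t))) k 0 := by
    have := ((((hasDerivAt_id (0:ℝ)).const_mul k).neg).exp).const_sub 1
    simpa using this
  have h := hd.tendsto_slope_zero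
  have hi : Tendsto (fun x : ℝ => x⁻¹) atTop (nhdsWithin 0 {0}ᶜ) :=
    tendsto_inv_atTop_nhdsGT_zero.mono_right (nhdsWithin_mono _ fun x hx => ne_of_gt hx)
  simpa [Function.comp_def, div_eq_mul_inv] using h.comp hi

/-- If `(V, W)` is a pair of a.s. positive random variables whose joint
distribution function on `(0,∞)²` is the Hüsler–Reiss distribution with parameter `δ`, then
`lim_{x→∞} P(W > c_B x | V > c_A x)
  = Φ̄(log(c_B/c_A)/(2√δ) + √δ) + (c_A/c_B) Φ̄(log(c_A/c_B)/(2√δ) + √δ)`. -/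
theorem statement_13
    {Ω : Type*} [MeasurableSpace Ω] (P : Measure Ω) [IsProbabilityMeasure P]
    (V W : Ω → ℝ) (hV : Measurable V) (hW : Measurable W)
    (hVpos : P {ω | 0 < V ω} = 1) (hWpos : P {ω | 0 < W ω} = 1)
    (δ cA cB : ℝ) (hδ : 0 < δ) (hcA : 0 < cA) (hcB : 0 < cB)
    (hjoint : ∀ y₁ y₂ : ℝ, 0 < y₁ → 0 < y₂ →
      (P {ω | V ω ≤ y₁ ∧ W ω ≤ y₂}).toReal = huslerReiss δ y₁ y₂) :
    Tendsto
      (fun x : ℝ =>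
        (P {ω | cB * x < W ω ∧ cA * x < V ω}).toReal / (P {ω | cA * x < V ω}).toReal)
      atTop
      (nhds
        (stdNormalTail (Real.log (cB / cA) / (2 * Real.sqrt δ) + Real.sqrt δ)
          + (cA / cB) * stdNormalTail (Real.log (cA / cB) / (2 * Real.sqrt δ) + Real.sqrt δ))) := by
  set p := stdNormalCDF (Real.log (cB / cA) / (2 * Real.sqrt δ) + Real.sqrt δ) with hp
  set q := stdNormalCDF (Real.log (cA / cB) / (2 * Real.sqrt δ) + Real.sqrt δ) with hq
  have mV : ∀ y, 0 < y → P.real {ω | V ω ≤ y} = Real.exp (-(1 / y)) := fun y hy =>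
    marginal P V W δ y hδ hy fun z hz => hjoint y z hy hz
  have mW : ∀ y, 0 < y → P.real {ω | W ω ≤ y} = Real.exp (-(1 / y)) := fun y hy =>
    marginal P W V δ y hδ hy fun z hz => by
      rw [hr_symm, ← hjoint z y hz hy]; simp only [and_comm]
  have hden : ∀ y, 0 < y → P.real {ω | y < V ω} = 1 - Real.exp (-(1 / y)) := fun y hy => by
    rw [← mV y hy, ← probReal_compl_eq_one_sub (measurableSet_le hV measurable_const)]
    congr 1; ext ω; simp
  have hnum : ∀ a b, 0 < a → 0 < b → P.real {ω | b < W ω ∧ a < V ω} =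
      1 - Real.exp (-(1 / a)) - Real.exp (-(1 / b)) + huslerReiss δ a b := fun a b ha hb => by
    have mA : MeasurableSet {ω | V ω ≤ a} := measurableSet_le hV measurable_const
    have mB : MeasurableSet {ω | W ω ≤ b} := measurableSet_le hW measurable_const
    have e : {ω | b < W ω ∧ a < V ω} = ({ω | V ω ≤ a} ∪ {ω | W ω ≤ b})ᶜ := by
      ext ω; simp [and_comm]
    have h1 := measureReal_union_add_inter (μ := P) (s := {ω | V ω ≤ a}) mB
    have h2 : P.real ({ω | V ω ≤ a} ∩ {ω | W ω ≤ b}) = huslerReiss δ a b := hjoint a b ha hb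
    rw [mV a ha, mW b hb, h2] at h1
    rw [e, probReal_compl_eq_one_sub (mA.union mB)]
    linarith
  have lim := (((exp_lim (1 / cA)).add (exp_lim (1 / cB))).sub
    (exp_lim (p / cA + q / cB))).div (exp_lim (1 / cA)) (by positivity)
  have hval : (1 / cA + 1 / cB - (p / cA + q / cB)) / (1 / cA) =
      stdNormalTail (Real.log (cB / cA) / (2 * Real.sqrt δ) + Real.sqrt δ)
          + (cA / cB) * stdNormalTail (Real.log (cA / cB) / (2 * Real.sqrt δ) + Real.sqrt δ) := by
    unfold stdNormalTail
    rw [← hp, ← hq]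
    field_simp
    ring
  rw [hval] at lim
  refine lim.congr' ?_
  filter_upwards [eventually_gt_atTop 0] with x hx
  have ha : 0 < cA * x := by positivity
  have hb : 0 < cB * x := by positivity
  change _ = P.real _ / P.real _
  rw [hden _ ha, hnum _ _ ha hb]
  have hF : huslerReiss δ (cA * x) (cB * x) = Real.exp (-((p / cA + q / cB) / x)) := by
    unfold huslerReiss
    rw [mul_div_mul_right _ _ hx.ne', mul_div_mul_right _ _ hx.ne', ← hp, ← hq]
    congr 1
    field_simp
    ring
  rw [hF, Pi.div_apply, ← div_div 1 cA x, ← div_div 1 cB x, ← mul_add, ← mul_sub, mul_div_mul_left _ _ hx.ne']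
  congr 1
  ring
end

section
/- Let δ > 0, c_A > 0, c_B > 0, let F be the Hüsler–Reiss bivariate distribution function with parameter δ, and for m > 1 let a_m = −1/log(1 − 1/m) (so that m(1 − e^{−1/a_m}) = 1). Define the pre-asymptotic extremogram ρ_m = τ_m / p_m, where τ_m = m[ 1 − e^{−1/(c_A a_m)} − e^{−1/(c_B a_m)} + F(a_m c_A, a_m c_B) ] and p_m = m(1 − e^{−1/(c_A a_m)}), and let ρ = c_A [ (1/c_A) Φ̄( log(c_B/c_A)/(2√δ) + √δ ) + (1/c_B) Φ̄( log(c_A/c_B)/(2√δ) + √δ ) ]. Then there is a constant K such that |ρ_m − ρ| ≤ K/m for all sufficiently large m; consequently, for any positive sequences (S_n), (λ_n), (m_n) with m_n → ∞ and S_n λ_n² / m_n³ → 0, one has √(S_n λ_n² / m_n) · |ρ_{m_n} − ρ| → 0. -/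
open MeasureTheory Filter Real

/-- `a_m = −1/log(1−1/m)`. -/
noncomputable def aSeq (m : ℝ) : ℝ := -1 / Real.log (1 - 1 / m)

/-- `τ_m = m[1 − e^{−1/(c_A a_m)} − e^{−1/(c_B a_m)} + F(a_m c_A, a_m c_B)]`. -/
noncomputable def tauPA (δ cA cB m : ℝ) : ℝ :=
  m * (1 - Real.exp (-1 / (cA * aSeq m)) - Real.exp (-1 / (cB * aSeq m))
    + huslerReiss δ (aSeq m * cA) (aSeq m * cB))

/-- `p_m = m(1 − e^{−1/(c_A a_m)})`. -/
noncomputable def pPA (cA m : ℝ) : ℝ := m * (1 - Real.exp (-1 / (cA * aSeq m)))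

/-- The pre-asymptotic extremogram `ρ_m = τ_m / p_m`. -/
noncomputable def rhoPA (δ cA cB m : ℝ) : ℝ := tauPA δ cA cB m / pPA cA m

/-- The limiting extremogram
`ρ = c_A [(1/c_A) Φ̄(log(c_B/c_A)/(2√δ)+√δ) + (1/c_B) Φ̄(log(c_A/c_B)/(2√δ)+√δ)]`. -/
noncomputable def rhoLimit (δ cA cB : ℝ) : ℝ :=
  cA * ((1 / cA) * stdNormalTail (Real.log (cB / cA) / (2 * Real.sqrt δ) + Real.sqrt δ)
    + (1 / cB) * stdNormalTail (Real.log (cA / cB) / (2 * Real.sqrt δ) + Real.sqrt δ))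

/-- Elementary expansion bound. -/
theorem ratio_bound (α β V u : ℝ) (hα : 0 < α) (hβ : 0 < β) (hu : 0 < u)
    (hs : (α + β + |V|) * u ≤ 1 / 2) :
    |(1 - Real.exp (-(α * u)) - Real.exp (-(β * u)) + Real.exp (-(V * u)))
        / (1 - Real.exp (-(α * u))) - (α + β - V) / α|
      ≤ (2 * (α ^ 2 + β ^ 2 + V ^ 2 + |(α + β - V) / α| * α ^ 2) / α) * u := by
  have hV0 : 0 ≤ |V| * u := by positivity
  have hα0 : 0 < α * u := by positivity
  have hβ0 : 0 < β * u := by positivity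
  have hα1 : α * u ≤ 1 / 2 := by nlinarith
  have hβ1 : β * u ≤ 1 / 2 := by nlinarith
  have hV1 : |V| * u ≤ 1 / 2 := by nlinarith
  have e1 := Real.abs_exp_sub_one_sub_id_le (x := -(α * u))
    (by rw [abs_neg, abs_of_pos hα0]; linarith)
  have e2 := Real.abs_exp_sub_one_sub_id_le (x := -(β * u))
    (by rw [abs_neg, abs_of_pos hβ0]; linarith)
  have e3 := Real.abs_exp_sub_one_sub_id_le (x := -(V * u))
    (by rw [abs_neg, abs_mul, abs_of_pos hu]; linarith)
  set A := Real.exp (-(α * u))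
  set B := Real.exp (-(β * u))
  set C := Real.exp (-(V * u))
  set r := (α + β - V) / α with hr
  have hrα : r * α = α + β - V := by rw [hr]; field_simp
  have hD : α * u / 2 ≤ 1 - A := by
    have := (abs_le.mp e1).2
    nlinarith
  have hD0 : 0 < 1 - A := by linarith
  have key : (1 - A - B + C) / (1 - A) - r = ((1 - A - B + C) - r * (1 - A)) / (1 - A) := by
    field_simp
  rw [key, abs_div, abs_of_pos hD0, div_le_iff₀ hD0]
  have hN : (1 - A - B + C) - r * (1 - A)
      = -(A - 1 - -(α * u)) - (B - 1 - -(β * u)) + (C - 1 - -(V * u))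
        + r * (A - 1 - -(α * u)) := by
    linear_combination (-u) * hrα
  have hN2 : |(1 - A - B + C) - r * (1 - A)|
      ≤ (α ^ 2 + β ^ 2 + V ^ 2 + |r| * α ^ 2) * u ^ 2 := by
    rw [hN]
    have h4 : |r * (A - 1 - -(α * u))| ≤ |r| * (-(α * u)) ^ 2 := by
      rw [abs_mul]; gcongr
    rw [abs_le] at e1 e2 e3 h4 ⊢
    constructor <;> nlinarith
  refine hN2.trans ?_
  calc (α ^ 2 + β ^ 2 + V ^ 2 + |r| * α ^ 2) * u ^ 2
      = (2 * (α ^ 2 + β ^ 2 + V ^ 2 + |r| * α ^ 2) / α) * u * (α * u / 2) := by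
        field_simp
    _ ≤ _ := by gcongr

theorem rate_bound (δ cA cB : ℝ) (hcA : 0 < cA) (hcB : 0 < cB) :
    ∃ K M : ℝ, ∀ m : ℝ, M ≤ m → |rhoPA δ cA cB m - rhoLimit δ cA cB| ≤ K / m := by
  set P := stdNormalCDF (Real.log (cB / cA) / (2 * Real.sqrt δ) + Real.sqrt δ) with hP
  set Q := stdNormalCDF (Real.log (cA / cB) / (2 * Real.sqrt δ) + Real.sqrt δ) with hQ
  set V := cA⁻¹ * P + cB⁻¹ * Q with hV
  set C := 2 * ((cA⁻¹) ^ 2 + (cB⁻¹) ^ 2 + V ^ 2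
    + |(cA⁻¹ + cB⁻¹ - V) / cA⁻¹| * (cA⁻¹) ^ 2) / cA⁻¹ with hC
  have hC0 : 0 ≤ C := by positivity
  refine ⟨C * 2, 4 * (cA⁻¹ + cB⁻¹ + |V|) + 2, fun m hm => ?_⟩
  have hT : 0 ≤ cA⁻¹ + cB⁻¹ + |V| := by positivity
  have hm2 : 2 ≤ m := by linarith
  have hm0 : 0 < m := by linarith
  have hinv : 1 / m ≤ 1 / 2 := by gcongr
  have hinv0 : 0 < 1 / m := by positivity
  obtain ⟨u, hu⟩ : ∃ u, u = -Real.log (1 - 1 / m) := ⟨_, rfl⟩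
  have hu0 : 0 < u := by
    have := Real.log_neg (x := 1 - 1 / m) (by linarith) (by linarith)
    linarith
  have hu1 : u ≤ 2 / m := by
    have h := Real.one_sub_inv_le_log_of_pos (x := 1 - 1 / m) (by linarith)
    have h2 : (1 - 1 / m)⁻¹ ≤ 1 + 2 / m := by
      rw [inv_le_iff_one_le_mul₀ (by linarith)]
      have : 2 / m = 2 * (1 / m) := by ring
      rw [this]
      nlinarith
    linarith
  have ha : aSeq m = u⁻¹ := by
    rw [aSeq, hu, inv_neg, neg_div, one_div]
  have hs : (cA⁻¹ + cB⁻¹ + |V|) * u ≤ 1 / 2 := by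
    calc _ ≤ (cA⁻¹ + cB⁻¹ + |V|) * (2 / m) := by gcongr
      _ ≤ 1 / 2 := by
        rw [← mul_div_assoc, div_le_iff₀ hm0]; linarith
  have hb := ratio_bound cA⁻¹ cB⁻¹ V u (by positivity) (by positivity) hu0 hs
  have h1 : rhoPA δ cA cB m = (1 - Real.exp (-(cA⁻¹ * u)) - Real.exp (-(cB⁻¹ * u))
      + Real.exp (-(V * u))) / (1 - Real.exp (-(cA⁻¹ * u))) := by
    have r1 : u⁻¹ * cB / (u⁻¹ * cA) = cB / cA := by field_simp
    have r2 : u⁻¹ * cA / (u⁻¹ * cB) = cA / cB := by field_simp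
    have x1 : -1 / (cA * u⁻¹) = -(cA⁻¹ * u) := by field_simp
    have x2 : -1 / (cB * u⁻¹) = -(cB⁻¹ * u) := by field_simp
    have x3 : -(1 / (u⁻¹ * cA)) * P - 1 / (u⁻¹ * cB) * Q = -(V * u) := by
      rw [hV]; field_simp; ring
    rw [rhoPA, tauPA, pPA, huslerReiss, ha, r1, r2, x1, x2, ← hP, ← hQ, x3,
      mul_div_mul_left _ _ hm0.ne']
  have h2 : rhoLimit δ cA cB = (cA⁻¹ + cB⁻¹ - V) / cA⁻¹ := by
    rw [rhoLimit, stdNormalTail, stdNormalTail, ← hP, ← hQ, hV]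
    field_simp
    ring
  rw [h1, h2]
  refine hb.trans ?_
  calc C * u ≤ C * (2 / m) := by gcongr
    _ = C * 2 / m := by ring

/-- `|ρ_m − ρ| ≤ K/m` for large `m`; consequently for positive sequences
`S_n, λ_n, m_n` with `m_n → ∞` and `S_n λ_n² / m_n³ → 0` one has
`√(S_n λ_n²/m_n) · |ρ_{m_n} − ρ| → 0`. -/
theorem statement_14 (δ cA cB : ℝ) (hδ : 0 < δ) (hcA : 0 < cA) (hcB : 0 < cB) :
    (∃ K M : ℝ, ∀ m : ℝ, M ≤ m → |rhoPA δ cA cB m - rhoLimit δ cA cB| ≤ K / m)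
    ∧ ∀ S lam mseq : ℕ → ℝ,
        (∀ n, 0 < S n) → (∀ n, 0 < lam n) → (∀ n, 0 < mseq n) →
        Tendsto mseq atTop atTop →
        Tendsto (fun n => S n * lam n ^ 2 / mseq n ^ 3) atTop (nhds 0) →
        Tendsto
          (fun n => Real.sqrt (S n * lam n ^ 2 / mseq n)
            * |rhoPA δ cA cB (mseq n) - rhoLimit δ cA cB|)
          atTop (nhds 0) := by
  obtain ⟨K, M, hKM⟩ := rate_bound δ cA cB hcA hcB
  refine ⟨⟨K, M, hKM⟩, fun S lam mseq hS hl hm hmt ht => ?_⟩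
  have hlim : Tendsto (fun n => K * Real.sqrt (S n * lam n ^ 2 / mseq n ^ 3)) atTop (nhds 0) := by
    have := (ht.sqrt).const_mul K
    simpa using this
  refine squeeze_zero' (Eventually.of_forall fun n => by positivity) ?_ hlim
  filter_upwards [hmt.eventually_ge_atTop M] with n hn
  have hmn := hm n
  have e : Real.sqrt (S n * lam n ^ 2 / mseq n ^ 3)
      = Real.sqrt (S n * lam n ^ 2 / mseq n) / mseq n := by
    have : S n * lam n ^ 2 / mseq n ^ 3 = S n * lam n ^ 2 / mseq n / mseq n ^ 2 := by
      field_simp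
    rw [this, Real.sqrt_div' _ (by positivity), Real.sqrt_sq hmn.le]
  calc _ ≤ Real.sqrt (S n * lam n ^ 2 / mseq n) * (K / mseq n) := by
        gcongr
        exact hKM _ hn
    _ = _ := by rw [e]; ring
end

section
/- Let W be a nonnegative integrable random variable on a probability space, let δ > 0, and let (a_n) be a sequence of positive reals with a_n/n → 1. Then n · E[ 4W/(δ a_n) − 1 + exp(−4W/(δ a_n)) ] → 0 as n → ∞. -/
open MeasureTheory Filter Real

/-- Let `W` be a nonnegative integrable random variable, `δ > 0`, and `(a n)` a
sequence of positive reals with `a n / n → 1`. Then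
`n * E[4W/(δ aₙ) − 1 + exp(−4W/(δ aₙ))] → 0`. -/
theorem statement_19
    {Ω : Type*} [MeasurableSpace Ω] (P : Measure Ω) [IsProbabilityMeasure P]
    (W : Ω → ℝ) (hW_nonneg : ∀ᵐ ω ∂P, 0 ≤ W ω) (hW_int : Integrable W P)
    (δ : ℝ) (hδ : 0 < δ)
    (a : ℕ → ℝ) (ha_pos : ∀ n, 0 < a n)
    (ha : Tendsto (fun n : ℕ => a n / (n : ℝ)) atTop (nhds 1)) :
    Tendsto
      (fun n : ℕ => (n : ℝ) *
        ∫ ω, (4 * W ω / (δ * a n) - 1 + Real.exp (-(4 * W ω) / (δ * a n))) ∂P)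
      atTop (nhds 0) := by
  have key : ∀ x : ℝ, 0 ≤ x → 0 ≤ x - 1 + Real.exp (-x) ∧ x - 1 + Real.exp (-x) ≤ x ∧
      x - 1 + Real.exp (-x) ≤ x ^ 2 := by
    intro x hx
    have h1 := Real.add_one_le_exp (-x)
    have h2 : Real.exp (-x) ≤ 1 := Real.exp_le_one_iff.mpr (by linarith)
    have h3 : Real.exp (-x) * (1 + x) ≤ 1 := by
      have h4 := Real.add_one_le_exp x
      have h5 : Real.exp (-x) * Real.exp x = 1 := by rw [← Real.exp_add]; simp
      nlinarith [Real.exp_pos (-x)]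
    exact ⟨by linarith, by linarith, by nlinarith⟩
  have hev : ∀ᶠ n : ℕ in atTop, 0 < (n : ℝ) ∧ (n : ℝ) / a n ≤ 2 := by
    have h1 := ha.eventually (lt_mem_nhds (show (1 / 2 : ℝ) < 1 by norm_num))
    filter_upwards [h1, eventually_gt_atTop 0] with n hn hn0
    have hn0' : 0 < (n : ℝ) := by exact_mod_cast hn0
    refine ⟨hn0', ?_⟩
    rw [lt_div_iff₀ hn0'] at hn
    rw [div_le_iff₀ (ha_pos n)]
    linarith
  have hmain : ∀ w : ℝ, 0 ≤ w → ∀ n : ℕ, 0 < (n : ℝ) → (n : ℝ) / a n ≤ 2 →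
      0 ≤ (n : ℝ) * (4 * w / (δ * a n) - 1 + Real.exp (-(4 * w) / (δ * a n))) ∧
      (n : ℝ) * (4 * w / (δ * a n) - 1 + Real.exp (-(4 * w) / (δ * a n))) ≤ 8 / δ * w ∧
      (n : ℝ) * (4 * w / (δ * a n) - 1 + Real.exp (-(4 * w) / (δ * a n)))
        ≤ (8 / δ * w) ^ 2 / n := by
    intro w hw n hn h2
    have han := ha_pos n
    have hx : 0 ≤ 4 * w / (δ * a n) := by positivity
    have hnx : (n : ℝ) * (4 * w / (δ * a n)) ≤ 8 / δ * w := by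
      calc (n : ℝ) * (4 * w / (δ * a n)) = (4 * w / δ) * (n / a n) := by field_simp
        _ ≤ (4 * w / δ) * 2 := by gcongr
        _ = 8 / δ * w := by ring
    rw [neg_div]
    obtain ⟨k1, k2, k3⟩ := key _ hx
    refine ⟨mul_nonneg hn.le k1, (mul_le_mul_of_nonneg_left k2 hn.le).trans hnx, ?_⟩
    refine (mul_le_mul_of_nonneg_left k3 hn.le).trans ?_
    rw [le_div_iff₀ hn]
    calc (n : ℝ) * (4 * w / (δ * a n)) ^ 2 * n = (n * (4 * w / (δ * a n))) ^ 2 := by ring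
      _ ≤ _ := by gcongr
  simp_rw [← integral_const_mul]
  have := tendsto_integral_filter_of_dominated_convergence (μ := P) (l := (atTop : Filter ℕ))
    (F := fun (n : ℕ) ω => (n : ℝ) *
      (4 * W ω / (δ * a n) - 1 + Real.exp (-(4 * W ω) / (δ * a n))))
    (f := fun _ => (0 : ℝ)) (fun ω => 8 / δ * W ω) ?_ ?_ (hW_int.const_mul _) ?_
  · simpa using this
  · refine Eventually.of_forall fun n => ?_
    have hm := hW_int.aemeasurable
    apply AEMeasurable.aestronglyMeasurable
    fun_prop
  · filter_upwards [hev] with n hn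
    filter_upwards [hW_nonneg] with ω hω
    obtain ⟨h1, h2, _⟩ := hmain _ hω n hn.1 hn.2
    rw [Real.norm_of_nonneg h1]
    exact h2
  · filter_upwards [hW_nonneg] with ω hω
    refine tendsto_of_tendsto_of_tendsto_of_le_of_le' tendsto_const_nhds
      (tendsto_const_div_atTop_nhds_zero_nat ((8 / δ * W ω) ^ 2)) ?_ ?_
    · filter_upwards [hev] with n hn using (hmain _ hω n hn.1 hn.2).1
    · filter_upwards [hev] with n hn using (hmain _ hω n hn.1 hn.2).2.2
end
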